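/- arXiv:2104.15083 — 2 statements merged into one kernel-verified Lean document; each statement's English description precedes it below -/
import Mathlib

section
/- For any two distinct nonempty finite traces u ≠ v over a nonempty set P of propositional variables, there exists an LTLf formula φ such that V(u ⊨ φ) = 1 and V(v ⊨ φ) = 0. -/
/-- Syntax of LTLf formulas over propositional variables `P`:
`φ ::= p | ¬φ | φ ∨ φ | X φ | φ U φ`. -/
inductive LTL (P : Type) : Type
  | atom : P → LTL P
  | neg  : LTL P → LTL P
  | disj : LTL P → LTL P → LTL P
  | next : LTL P → LTL P
  | untl : LTL P → LTL P → LTL P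

open Classical in
/-- The valuation `V(φ, u, i) ∈ {0,1}` of an LTLf formula on a finite trace
`u : List (Set P)` at position `i`. -/
noncomputable def Val {P : Type} : LTL P → List (Set P) → ℕ → ℕ
  | .atom p, u, i => if p ∈ u.getD i ∅ then 1 else 0
  | .neg φ, u, i => 1 - Val φ u i
  | .disj φ ψ, u, i => max (Val φ u i) (Val ψ u i)
  | .next φ, u, i => if i + 1 < u.length ∧ Val φ u (i + 1) = 1 then 1 else 0
  | .untl φ ψ, u, i =>
      if ∃ j, i ≤ j ∧ j < u.length ∧ Val ψ u j = 1 ∧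
          ∀ k, i ≤ k → k < j → Val φ u k = 1 then 1 else 0

theorem Val_le_one {P : Type} (φ : LTL P) (u : List (Set P)) (i : ℕ) : Val φ u i ≤ 1 := by
  induction φ generalizing i with
  | atom p => simp only [Val]; split_ifs <;> simp
  | neg φ ih => simp only [Val]; omega
  | disj φ ψ ih1 ih2 => simp only [Val]; exact max_le (ih1 i) (ih2 i)
  | next φ ih => simp only [Val]; split_ifs <;> simp
  | untl φ ψ ih1 ih2 => simp only [Val]; split_ifs <;> simp

theorem Val_next_iter {P : Type} (φ : LTL P) (u : List (Set P)) (n i : ℕ) (hi : i < u.length) :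
    Val (LTL.next^[n] φ) u i = 1 ↔ i + n < u.length ∧ Val φ u (i + n) = 1 := by
  induction n generalizing i with
  | zero => simp [hi]
  | succ n ih =>
    rw [Function.iterate_succ_apply']
    simp only [Val, ite_eq_left_iff, zero_ne_one, imp_false, not_not]
    have e : i + (n + 1) = i + 1 + n := by omega
    rw [e]
    constructor
    · rintro ⟨h1, h2⟩
      exact (ih (i + 1) h1).1 h2
    · rintro ⟨h1, h2⟩
      have h3 : i + 1 < u.length := by omega
      exact ⟨h3, (ih (i + 1) h3).2 ⟨h1, h2⟩⟩

theorem sep_of_iff {P : Type} (φ : LTL P) (u v : List (Set P))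
    (h : ¬ (Val φ u 0 = 1 ↔ Val φ v 0 = 1)) :
    ∃ φ : LTL P, Val φ u 0 = 1 ∧ Val φ v 0 = 0 := by
  have h1 := Val_le_one φ u 0
  have h2 := Val_le_one φ v 0
  by_cases h3 : Val φ u 0 = 1
  · exact ⟨φ, h3, by omega⟩
  · refine ⟨.neg φ, ?_, ?_⟩ <;> simp only [Val] <;> omega

theorem Val_taut {P : Type} (p : P) (u : List (Set P)) (i : ℕ) :
    Val (.disj (.atom p) (.neg (.atom p))) u i = 1 := by
  have h := Val_le_one (.atom p) u i
  simp only [Val] at h ⊢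
  omega

/-- Any two distinct nonempty traces over a nonempty set `P` can be separated
by an LTLf formula. -/
theorem separating_formula_of_ne {P : Type} [Nonempty P]
    (u v : List (Set P)) (hu : u ≠ []) (hv : v ≠ []) (huv : u ≠ v) :
    ∃ φ : LTL P, Val φ u 0 = 1 ∧ Val φ v 0 = 0 := by
  have hu0 : 0 < u.length := List.length_pos_iff.2 hu
  have hv0 : 0 < v.length := List.length_pos_iff.2 hv
  by_contra hne
  have key : ∀ φ : LTL P, Val φ u 0 = 1 ↔ Val φ v 0 = 1 := by
    intro φ
    by_contra h
    exact hne (sep_of_iff φ u v h)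
  have key2 : ∀ (φ : LTL P) (n : ℕ), (n < u.length ∧ Val φ u n = 1) ↔
      (n < v.length ∧ Val φ v n = 1) := by
    intro φ n
    have h := key (LTL.next^[n] φ)
    rw [Val_next_iter _ _ _ _ hu0, Val_next_iter _ _ _ _ hv0] at h
    simpa using h
  have hlen : ∀ n, n < u.length ↔ n < v.length := by
    intro n
    obtain ⟨p⟩ := ‹Nonempty P›
    simpa [Val_taut] using key2 (.disj (.atom p) (.neg (.atom p))) n
  apply huv
  apply List.ext_getElem
  · have a := hlen u.length
    have b := hlen v.length
    omega
  · intro n h1 h2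
    ext p
    simpa [Val, h1, h2] using key2 (.atom p) n
end

section
/- For every sample S over a nonempty set P of propositional variables (all traces of S being nonempty), there exists an LTLf formula φ that perfectly classifies S, i.e., V(u ⊨ φ) = b for every (u,b) ∈ S; equivalently, l(S,φ) = 0. -/
/-- The loss `l(S,φ) = (1/|S|) · Σ_{(u,b)∈S} |V(u⊨φ) − b|`. -/
noncomputable def loss {P : Type} (S : Finset (List (Set P) × ℕ)) (φ : LTL P) : ℝ :=
  (∑ x ∈ S, |(Val φ x.1 0 : ℝ) - (x.2 : ℝ)|) / (S.card : ℝ)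

theorem Val_01 {P : Type} (φ : LTL P) (u : List (Set P)) (i : ℕ) :
    Val φ u i = 0 ∨ Val φ u i = 1 := by
  induction φ generalizing i with
  | atom p => simp only [Val]; split_ifs <;> simp
  | neg a ih => simp only [Val]; have := ih i; omega
  | disj a b iha ihb => simp only [Val]; have := iha i; have := ihb i; omega
  | next a ih => simp only [Val]; split_ifs <;> simp
  | untl a b iha ihb => simp only [Val]; split_ifs <;> simp

def LTL.top {P : Type} (p : P) : LTL P := .disj (.atom p) (.neg (.atom p))

def LTL.conj {P : Type} (a b : LTL P) : LTL P := .neg (.disj (.neg a) (.neg b))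

def LTL.nextN {P : Type} : ℕ → LTL P → LTL P
  | 0, a => a
  | n + 1, a => .next (LTL.nextN n a)

theorem Val_top {P : Type} (p : P) (u : List (Set P)) (i : ℕ) :
    Val (LTL.top p) u i = 1 := by
  simp only [LTL.top, Val]; split_ifs <;> simp

theorem Val_bot {P : Type} (p : P) (u : List (Set P)) (i : ℕ) :
    Val (LTL.neg (LTL.top p)) u i = 0 := by
  simp only [Val, Val_top]

theorem Val_conj {P : Type} (a b : LTL P) (u : List (Set P)) (i : ℕ) :
    Val (LTL.conj a b) u i = 1 ↔ Val a u i = 1 ∧ Val b u i = 1 := by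
  have := Val_01 a u i
  have := Val_01 b u i
  simp only [LTL.conj, Val]; omega

theorem Val_nextN {P : Type} (n : ℕ) (a : LTL P) (u : List (Set P)) (i : ℕ)
    (hi : i < u.length) :
    Val (LTL.nextN n a) u i = 1 ↔ i + n < u.length ∧ Val a u (i + n) = 1 := by
  induction n generalizing i with
  | zero => simp [LTL.nextN, hi]
  | succ n ih =>
    simp only [LTL.nextN, Val, ite_eq_left_iff, zero_ne_one, imp_false, not_not]
    have e : i + 1 + n = i + (n + 1) := by omega
    constructor
    · rintro ⟨h1, h2⟩
      rw [ih _ h1, e] at h2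
      exact h2
    · rintro ⟨h1, h2⟩
      have h3 : i + 1 < u.length := by omega
      refine ⟨h3, ?_⟩
      rw [ih _ h3, e]
      exact ⟨h1, h2⟩

theorem eq_of_Val_eq {P : Type} [Nonempty P] (u v : List (Set P)) (hu : u ≠ []) (hv : v ≠ [])
    (h : ∀ φ : LTL P, Val φ u 0 = 1 ↔ Val φ v 0 = 1) : u = v := by
  obtain ⟨p⟩ := ‹Nonempty P›
  have hu' := List.length_pos_iff.2 hu
  have hv' := List.length_pos_iff.2 hv
  have key : ∀ n (a : LTL P), (n < u.length ∧ Val a u n = 1) ↔ (n < v.length ∧ Val a v n = 1) := by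
    intro n a
    have := h (LTL.nextN n a)
    rw [Val_nextN _ _ _ _ hu', Val_nextN _ _ _ _ hv'] at this
    simpa using this
  have hl : u.length = v.length := by
    have h1 := key u.length (LTL.top p)
    have h2 := key v.length (LTL.top p)
    simp only [Val_top, and_true] at h1 h2
    omega
  refine List.ext_getElem hl fun n h1 h2 => ?_
  ext q
  have := key n (.atom q)
  simpa [Val, h1, h2] using this

theorem exists_char {P : Type} [Nonempty P] (u : List (Set P)) (hu : u ≠ [])
    (T : Finset (List (Set P))) (hT : ∀ v ∈ T, v ≠ []) :
    ∃ φ : LTL P, Val φ u 0 = 1 ∧ ∀ v ∈ T, v ≠ u → Val φ v 0 ≠ 1 := by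
  classical
  induction T using Finset.induction_on with
  | empty => exact ⟨LTL.top (Classical.arbitrary P), Val_top _ _ _, by simp⟩
  | insert w T hw ih =>
    obtain ⟨φ, h1, h2⟩ := ih fun v hv => hT v (Finset.mem_insert_of_mem hv)
    by_cases hwu : w = u
    · refine ⟨φ, h1, fun v hv hvu => ?_⟩
      rcases Finset.mem_insert.1 hv with rfl | hv
      · exact absurd hwu hvu
      · exact h2 v hv hvu
    · have : ∃ ψ : LTL P, Val ψ u 0 = 1 ∧ Val ψ w 0 ≠ 1 := by
        by_contra! hc
        refine hwu (eq_of_Val_eq u w hu (hT w (Finset.mem_insert_self _ _)) fun ψ => ⟨hc ψ, ?_⟩).symm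
        intro h
        by_contra h'
        have h0 := (Val_01 ψ u 0).resolve_right h'
        have := hc (.neg ψ) (by simp [Val, h0])
        simp [Val, h] at this
      obtain ⟨ψ, h3, h4⟩ := this
      refine ⟨LTL.conj φ ψ, (Val_conj _ _ _ _).2 ⟨h1, h3⟩, fun v hv hvu => ?_⟩
      rw [Ne, Val_conj]
      rintro ⟨h5, h6⟩
      rcases Finset.mem_insert.1 hv with rfl | hv
      · exact h4 h6
      · exact h2 v hv hvu h5

theorem exists_class {P : Type} [Nonempty P] (T A : Finset (List (Set P)))
    (hT : ∀ v ∈ T, v ≠ []) (hA : A ⊆ T) :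
    ∃ φ : LTL P, ∀ v ∈ T, Val φ v 0 = 1 ↔ v ∈ A := by
  classical
  induction A using Finset.induction_on with
  | empty => exact ⟨LTL.neg (LTL.top (Classical.arbitrary P)), by simp [Val_bot]⟩
  | insert w A hw ih =>
    obtain ⟨φ, h1⟩ := ih fun v hv => hA (Finset.mem_insert_of_mem hv)
    obtain ⟨ψ, h2, h3⟩ := exists_char w (hT w (hA (Finset.mem_insert_self _ _))) T hT
    refine ⟨.disj φ ψ, fun v hv => ?_⟩
    have e : Val (.disj φ ψ) v 0 = 1 ↔ Val φ v 0 = 1 ∨ Val ψ v 0 = 1 := by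
      have := Val_01 φ v 0
      have := Val_01 ψ v 0
      simp only [Val]; omega
    rw [e, h1 v hv, Finset.mem_insert, or_comm]
    have : Val ψ v 0 = 1 ↔ v = w :=
      ⟨fun h => by_contra fun h' => h3 v hv h' h, fun h => h ▸ h2⟩
    rw [this]

/-- Every sample (over nonempty `P`, with nonempty traces) admits an LTLf formula
that classifies it perfectly, i.e. with loss `0`. -/
theorem exists_perfect_classifier {P : Type} [Nonempty P]
    (S : Finset (List (Set P) × ℕ)) (hS : S.Nonempty)
    (hlab : ∀ x ∈ S, x.2 = 0 ∨ x.2 = 1)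
    (hfun : ∀ u b₁ b₂, (u, b₁) ∈ S → (u, b₂) ∈ S → b₁ = b₂)
    (hne : ∀ x ∈ S, x.1 ≠ []) :
    ∃ φ : LTL P, (∀ u b, (u, b) ∈ S → Val φ u 0 = b) ∧ loss S φ = 0 := by
  classical
  obtain ⟨φ, hφ⟩ := exists_class (S.image Prod.fst) ((S.filter (fun x => x.2 = 1)).image Prod.fst)
    (by
      intro v hv
      obtain ⟨x, hx, rfl⟩ := Finset.mem_image.1 hv
      exact hne x hx)
    (Finset.image_subset_image (Finset.filter_subset _ _))
  have main : ∀ u b, (u, b) ∈ S → Val φ u 0 = b := by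
    intro u b hub
    have h := hφ u (Finset.mem_image.2 ⟨_, hub, rfl⟩)
    have h' : u ∈ (S.filter (fun x => x.2 = 1)).image Prod.fst ↔ b = 1 := by
      constructor
      · intro hm
        obtain ⟨⟨x, c⟩, hx, rfl⟩ := Finset.mem_image.1 hm
        obtain ⟨hx, hc⟩ := Finset.mem_filter.1 hx
        exact (hfun _ _ _ hub hx).trans hc
      · intro hb
        exact Finset.mem_image.2 ⟨(u, b), Finset.mem_filter.2 ⟨hub, hb⟩, rfl⟩
    rw [h'] at h
    have h0 := Val_01 φ u 0
    have h1 := hlab _ hub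
    simp only at h1
    omega
  refine ⟨φ, main, ?_⟩
  unfold loss
  rw [Finset.sum_eq_zero, zero_div]
  rintro ⟨u, b⟩ hx
  simp [main u b hx]
end
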